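/- Let p be a prime, G a finite p-group and H ≤ G a subgroup. Then F(G) ≤ F(H) + ν_p(|G : H|), where F denotes the Frattini length and ν_p the p-adic valuation of the index |G : H|. -/

import Mathlib

/-- The iterated Frattini series: `Φ⁰(G) = G` and `Φⁿ⁺¹(G) = Φ(Φⁿ(G))`,
viewed as subgroups of `G`. -/
def frattiniSeries (G : Type*) [Group G] : ℕ → Subgroup G
  | 0 => ⊤
  | n + 1 => (frattini (frattiniSeries G n)).map (frattiniSeries G n).subtype

/-- The Frattini length: the least `n` with `Φⁿ(G) = {1}`. -/
noncomputable def frattiniLength (G : Type*) [Group G] : ℕ :=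
  sInf {n | frattiniSeries G n = ⊥}

theorem index_coatom_aux {p : ℕ} [Fact p.Prime] {B : Type*} [Group B] [Finite B]
    (hB : IsPGroup p B) {M : Subgroup B} (hM : IsCoatom M) : M.index = p := by
  have hp : p.Prime := Fact.out
  obtain ⟨b, hb⟩ := IsPGroup.iff_card.mp hB
  obtain ⟨m, hm⟩ := IsPGroup.iff_card.mp (hB.to_subgroup M)
  have hlt : m < b := by
    have h1 : p ^ m ≤ p ^ b := by rw [← hm, ← hb]; exact M.card_le_card_group
    have h2 : m ≤ b := (Nat.pow_le_pow_iff_right hp.one_lt).mp h1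
    rcases h2.lt_or_eq with h | h
    · exact h
    · exact absurd (Subgroup.eq_top_of_card_eq M (by rw [hm, hb, h])) hM.1
  obtain ⟨K, hK, hMK⟩ := Sylow.exists_subgroup_card_pow_succ (p := p) (n := m)
    (by rw [hb]; exact pow_dvd_pow p hlt) hm
  have hlt' : M < K := by
    refine lt_of_le_of_ne hMK ?_
    rintro rfl
    rw [hm] at hK
    have := Nat.pow_right_injective hp.two_le hK
    omega
  have hKt := hM.2 K hlt'
  have h3 := M.card_mul_index
  rw [hKt, Subgroup.card_top] at hK
  rw [hm, hK, pow_succ] at h3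
  exact Nat.eq_of_mul_eq_mul_left (pow_pos hp.pos m) h3

theorem frattini_le_comap_aux {p : ℕ} [Fact p.Prime] {A B : Type*} [Group A] [Group B]
    [Finite B] (hB : IsPGroup p B) (f : A →* B) : frattini A ≤ (frattini B).comap f := by
  have hp : p.Prime := Fact.out
  conv_rhs => rw [frattini, Order.radical]
  simp_rw [Subgroup.comap_iInf, le_iInf_iff]
  intro M hM
  have hi := index_coatom_aux hB hM
  have : Group.IsNilpotent B := hB.isNilpotent
  have : M.Normal := Subgroup.NormalizerCondition.normal_of_coatom M
    Group.normalizerCondition_of_isNilpotent hM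
  have hd : (M.comap f).index ∣ p := by
    rw [Subgroup.index_comap, ← hi]
    exact Subgroup.relIndex_dvd_index_of_normal _ _
  rcases (Nat.dvd_prime hp).mp hd with h | h
  · rw [Subgroup.index_eq_one.mp h]; exact le_top
  · apply frattini_le_coatom
    refine ⟨fun ht => hp.one_lt.ne (by rw [← h, ht, Subgroup.index_top]), fun K hK => ?_⟩
    have hm := Subgroup.relIndex_mul_index hK.le
    rw [h] at hm
    rcases (Nat.dvd_prime hp).mp (Dvd.intro_left _ hm) with h' | h'
    · exact Subgroup.index_eq_one.mp h'
    · rw [h'] at hm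
      have h1 : (M.comap f).relIndex K = 1 := Nat.eq_of_mul_eq_mul_right hp.pos (by rw [hm, one_mul])
      exact absurd (Subgroup.relIndex_eq_one.mp h1) (not_le_of_gt hK)

theorem frattini_map_equiv_aux {A B : Type*} [Group A] [Group B] (e : A ≃* B) :
    (frattini A).map e.toMonoidHom = frattini B :=
  e.mapSubgroup.map_radical

/-- Frattini subgroup of a subgroup, inside the ambient group. -/
def frattiniIn {G : Type*} [Group G] (K : Subgroup G) : Subgroup G :=
  (frattini K).map K.subtype

theorem frattiniIn_le {G : Type*} [Group G] (K : Subgroup G) : frattiniIn K ≤ K :=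
  Subgroup.map_subtype_le _

theorem frattiniIn_mono {p : ℕ} [Fact p.Prime] {G : Type*} [Group G] [Finite G]
    (hG : IsPGroup p G) : Monotone (frattiniIn (G := G)) := by
  intro A B h
  unfold frattiniIn
  have h1 := frattini_le_comap_aux (hG.to_subgroup B) (Subgroup.inclusion h)
  rw [Subgroup.map_le_iff_le_comap]
  intro x hx
  exact ⟨Subgroup.inclusion h x, h1 hx, rfl⟩

theorem frattiniIn_map {G : Type*} [Group G] (K : Subgroup G) (L : Subgroup K) :
    (frattiniIn L).map K.subtype = frattiniIn (L.map K.subtype) := by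
  unfold frattiniIn
  rw [← frattini_map_equiv_aux (L.equivMapOfInjective K.subtype K.subtype_injective),
    Subgroup.map_map, Subgroup.map_map]
  rfl

theorem frattiniSeries_map {G : Type*} [Group G] (K : Subgroup G) (n : ℕ) :
    (frattiniSeries K n).map K.subtype = frattiniIn^[n] K := by
  induction n with
  | zero => simp [frattiniSeries, ← MonoidHom.range_eq_map]
  | succ n ih =>
    rw [Function.iterate_succ_apply', ← ih, ← frattiniIn_map]
    rfl

theorem frattiniSeries_eq {G : Type*} [Group G] (n : ℕ) :
    frattiniSeries G n = frattiniIn^[n] ⊤ := by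
  induction n with
  | zero => rfl
  | succ n ih =>
    rw [Function.iterate_succ_apply', ← ih]
    rfl

theorem frattiniIn_coatom {G : Type*} [Group G] [Finite G] {H K : Subgroup G} (h : H < K) :
    ∃ M, H ≤ M ∧ M < K ∧ frattiniIn K ≤ M := by
  have hne : H.subgroupOf K ≠ ⊤ := fun ht => not_le_of_gt h (Subgroup.subgroupOf_eq_top.mp ht)
  obtain ht | ⟨M, hM, hle⟩ := eq_top_or_exists_le_coatom (H.subgroupOf K)
  · exact absurd ht hne
  refine ⟨M.map K.subtype, ?_, ?_, Subgroup.map_mono (frattini_le_coatom hM)⟩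
  · intro x hx
    exact ⟨⟨x, h.le hx⟩, hle hx, rfl⟩
  · refine lt_of_le_of_ne (Subgroup.map_subtype_le _) fun he => hM.1 ?_
    rw [eq_top_iff]
    intro x _
    have hx : (x : G) ∈ M.map K.subtype := by rw [he]; exact x.2
    obtain ⟨y, hy, hxy⟩ := hx
    rwa [← Subtype.ext hxy]

theorem exists_iterate_bot {G : Type*} [Group G] [Finite G] (K : Subgroup G) :
    ∃ n, frattiniIn^[n] K = ⊥ := by
  induction K using WellFoundedLT.induction with
  | ind K ih =>
    by_cases hK : K = ⊥
    · exact ⟨0, hK⟩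
    · obtain ⟨M, -, hMK, hle⟩ := frattiniIn_coatom (bot_lt_iff_ne_bot.mpr hK)
      obtain ⟨n, hn⟩ := ih _ (hle.trans_lt hMK)
      exact ⟨n + 1, hn⟩

theorem iterate_bot_mono {G : Type*} [Group G] (K : Subgroup G) {n m : ℕ} (h : n ≤ m)
    (hn : frattiniIn^[n] K = ⊥) : frattiniIn^[m] K = ⊥ := by
  induction m, h using Nat.le_induction with
  | base => exact hn
  | succ m _ ih =>
    rw [Function.iterate_succ_apply', ih]
    exact le_bot_iff.mp (frattiniIn_le _)

theorem iterate_main {p : ℕ} [Fact p.Prime] {G : Type*} [Group G] [Finite G]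
    (hG : IsPGroup p G) (H : Subgroup G) (n : ℕ) (hn : frattiniIn^[n] H = ⊥) (K : Subgroup G)
    (hHK : H ≤ K) : frattiniIn^[n + (H.relIndex K).factorization p] K = ⊥ := by
  have hp : p.Prime := Fact.out
  induction K using WellFoundedLT.induction with
  | ind K ih =>
    rcases hHK.eq_or_lt with rfl | hlt
    · exact iterate_bot_mono _ (Nat.le_add_right _ _) hn
    · obtain ⟨M, hHM, hMK, hle⟩ := frattiniIn_coatom hlt
      have h1 := ih M hMK hHM
      have h2 : frattiniIn^[(n + (H.relIndex M).factorization p) + 1] K = ⊥ := by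
        rw [Function.iterate_succ_apply, ← le_bot_iff, ← h1]
        exact (frattiniIn_mono hG).iterate _ hle
      refine iterate_bot_mono _ ?_ h2
      rw [← Subgroup.relIndex_mul_relIndex H M K hHM hMK.le,
        Nat.factorization_mul (a := H.relIndex M) (b := M.relIndex K)
          (Subgroup.index_ne_zero_of_finite (H := H.subgroupOf M))
          (Subgroup.index_ne_zero_of_finite (H := M.subgroupOf K))]
      obtain ⟨k, hk⟩ := (hG.to_subgroup K).index (M.subgroupOf K)
      have hk' : M.relIndex K = p ^ k := hk
      have hk0 : k ≠ 0 := by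
        rintro rfl
        exact not_le_of_gt hMK (Subgroup.relIndex_eq_one.mp (by simpa using hk'))
      rw [hk', hp.factorization_pow]
      simp
      omega

/-- For a finite `p`-group `G` and a subgroup `H ≤ G`,
`𝓕(G) ≤ 𝓕(H) + ν_p(|G : H|)`. -/
theorem frattiniLength_le_subgroup (p : ℕ) (hp : p.Prime)
    (G : Type*) [Group G] [Finite G] (hG : IsPGroup p G) (H : Subgroup G) :
    frattiniLength G ≤ frattiniLength H + (H.index).factorization p := by
  have : Fact p.Prime := ⟨hp⟩
  have hne : {n | frattiniSeries H n = ⊥}.Nonempty := by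
    obtain ⟨n, hn⟩ := exists_iterate_bot (⊤ : Subgroup H)
    exact ⟨n, (frattiniSeries_eq n).trans hn⟩
  have h1 : frattiniSeries H (frattiniLength H) = ⊥ := Nat.sInf_mem hne
  have h2 : frattiniIn^[frattiniLength H] H = ⊥ := by
    rw [← frattiniSeries_map, h1, Subgroup.map_bot]
  have h3 := iterate_main hG H _ h2 ⊤ le_top
  rw [Subgroup.relIndex_top_right] at h3
  exact Nat.sInf_le ((frattiniSeries_eq _).trans h3)
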